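/- (Fundamental Theorem of Asset Pricing for RAROC-based NGD.) Let ℛ𝒟 ⊆ 𝒫 be convex and weakly compact, 𝒫𝒟 an L^1-closed convex subset of ℛ𝒟, A ⊆ L^0 a convex, ℛ𝒟-consistent set, and R ≥ 0. Then there exists no X ∈ A with RAROC(X) > R if and only if ((1/(1+R))·𝒫𝒟 + (R/(1+R))·ℛ𝒟) ∩ ℛ(A) ≠ ∅. -/

import Mathlib

open MeasureTheory Filter Set
open scoped ENNReal

variable {Ω : Type*} [MeasurableSpace Ω]

/-- Densities of probability measures absolutely continuous w.r.t. `P`. -/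
def Dens (P : Measure Ω) : Set (Ω → ℝ) :=
  {Z | Measurable Z ∧ (∀ ω, 0 ≤ Z ω) ∧ ∫⁻ ω, ENNReal.ofReal (Z ω) ∂P = 1}

/-- `E_Q[X] = E_Q[X⁺] − E_Q[X⁻]` with the convention `∞ − ∞ = −∞`, where `dQ/dP = Z`. -/
noncomputable def eexp (P : Measure Ω) (Z X : Ω → ℝ) : EReal :=
  if (∫⁻ ω, ENNReal.ofReal (-(Z ω * X ω)) ∂P) = ⊤ then ⊥
  else ((∫⁻ ω, ENNReal.ofReal (Z ω * X ω) ∂P : ℝ≥0∞) : EReal)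
    - ((∫⁻ ω, ENNReal.ofReal (-(Z ω * X ω)) ∂P : ℝ≥0∞) : EReal)

/-- Coherent utility function determined by a set of densities `D`. -/
noncomputable def cohU (P : Measure Ω) (D : Set (Ω → ℝ)) (X : Ω → ℝ) : EReal :=
  ⨅ Z ∈ D, eexp P Z X

/-- The weak `L¹`-space associated with `D`. -/
def Lw (P : Measure Ω) (D : Set (Ω → ℝ)) : Set (Ω → ℝ) :=
  {X | Measurable X ∧ ⊥ < cohU P D X ∧ ⊥ < cohU P D (fun ω => -X ω)}

noncomputable def tailSup (P : Measure Ω) (D : Set (Ω → ℝ)) (X : Ω → ℝ) (n : ℕ) : ℝ≥0∞ :=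
  ⨆ Z ∈ D, ∫⁻ ω in {ω | (n : ℝ) < |X ω|}, ENNReal.ofReal (Z ω * |X ω|) ∂P

/-- The strong `L¹`-space associated with `D`. -/
def Ls (P : Measure Ω) (D : Set (Ω → ℝ)) : Set (Ω → ℝ) :=
  {X | Measurable X ∧ Tendsto (tailSup P D X) atTop (nhds 0)}

/-- Risk-neutral densities for the set `A` of attainable P&Ls. -/
def RiskNeutral (P : Measure Ω) (A : Set (Ω → ℝ)) : Set (Ω → ℝ) :=
  {Z | Z ∈ Dens P ∧ ∀ X ∈ A, eexp P Z X ≤ 0}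

/-- `A` is `D`-consistent. -/
def DConsistent (P : Measure Ω) (D A : Set (Ω → ℝ)) : Prop :=
  ∃ A' ⊆ A ∩ Ls P D, D ∩ RiskNeutral P A = D ∩ RiskNeutral P A'

/-- Sequential compactness of `D` in the weak topology `σ(L¹, L^∞)`. -/
def WSeqCompact (P : Measure Ω) (D : Set (Ω → ℝ)) : Prop :=
  ∀ Z : ℕ → Ω → ℝ, (∀ n, Z n ∈ D) → ∃ W ∈ D, ∃ φ : ℕ → ℕ, StrictMono φ ∧
    ∀ g : Ω → ℝ, Measurable g → (∃ C : ℝ, ∀ ω, |g ω| ≤ C) →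
      Tendsto (fun k => ∫ ω, Z (φ k) ω * g ω ∂P) atTop (nhds (∫ ω, W ω * g ω ∂P))

/-- `D` is closed under `L¹`-convergence (within densities). -/
def L1Closed (P : Measure Ω) (D : Set (Ω → ℝ)) : Prop :=
  ∀ Z : ℕ → Ω → ℝ, (∀ n, Z n ∈ D) → ∀ W ∈ Dens P,
    Tendsto (fun n => ∫ ω, |Z n ω - W ω| ∂P) atTop (nhds 0) → W ∈ D

/-- Risk-Adjusted Return on Capital for profit-determining set `PD` and risk-determining
set `RD`: `+∞` if the profit is positive and the risk is nonpositive, and otherwise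
`(inf_{Q∈PD} E_Q[X]) / (−inf_{Q∈RD} E_Q[X])`, with `0/0 = 0` and `∞/∞ = 0`
(conventions built into `EReal` division). -/
noncomputable def RAROC (P : Measure Ω) (PD RD : Set (Ω → ℝ)) (X : Ω → ℝ) : EReal :=
  if 0 < cohU P PD X ∧ 0 ≤ cohU P RD X then ⊤
  else cohU P PD X / (-(cohU P RD X))

/-- Every continuous linear functional on `L¹(P)` is integration against a bounded measurable
function. -/
theorem exists_bounded_density_of_dual_L1 (P : Measure Ω) [IsProbabilityMeasure P]
    (f : StrongDual ℝ (Lp ℝ 1 P)) :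
    ∃ g : Ω → ℝ, Measurable g ∧ (∃ C : ℝ, ∀ ω, |g ω| ≤ C) ∧
      ∀ h : Lp ℝ 1 P, f h = ∫ ω, h ω * g ω ∂P := by
  have hanti : Lp ℝ 2 P ≤ Lp ℝ 1 P := Lp.antitone (by norm_num)
  let incl : Lp ℝ 2 P →ₗ[ℝ] Lp ℝ 1 P :=
    { toFun := fun h => ⟨h.1, hanti h.2⟩
      map_add' := fun _ _ => rfl
      map_smul' := fun _ _ => rfl }
  have hincl : ∀ h, ‖incl h‖ ≤ 1 * ‖h‖ := by
    intro h
    rw [one_mul, Lp.norm_def, Lp.norm_def]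
    refine ENNReal.toReal_mono (Lp.eLpNorm_ne_top h) ?_
    exact eLpNorm_le_eLpNorm_of_exponent_le (by norm_num) (Lp.aestronglyMeasurable h)
  let T : StrongDual ℝ (Lp ℝ 2 P) := f.comp (incl.mkContinuous 1 hincl)
  obtain ⟨g₀, hg₀⟩ : ∃ g₀ : Lp ℝ 2 P, ∀ h, inner ℝ g₀ h = T h :=
    ⟨(InnerProductSpace.toDual ℝ (Lp ℝ 2 P)).symm T, fun _ =>
      InnerProductSpace.toDual_symm_apply⟩
  have hg₀int : Integrable g₀ P := (Lp.memLp g₀).integrable (by norm_num)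
  have hset : ∀ {s : Set Ω} (hs : MeasurableSet s) (c : ℝ),
      f (indicatorConstLp 1 hs (measure_ne_top P s) c) = c * ∫ ω in s, g₀ ω ∂P := by
    intro s hs c
    have hT : T (indicatorConstLp 2 hs (measure_ne_top P s) c)
        = f (indicatorConstLp 1 hs (measure_ne_top P s) c) := rfl
    rw [← hT, ← hg₀, real_inner_comm, L2.inner_indicatorConstLp_eq_inner_setIntegral ℝ hs,
      Real.inner_apply]
  have hbound : ∀ s, MeasurableSet s → |∫ ω in s, g₀ ω ∂P| ≤ ∫ _ω in s, ‖f‖ ∂P := by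
    intro s hs
    have h₁ := f.le_opNorm (indicatorConstLp 1 hs (measure_ne_top P s) (1 : ℝ))
    rw [hset hs, norm_indicatorConstLp (by norm_num) (by norm_num)] at h₁
    simpa [mul_comm] using h₁
  have hle : ∀ᵐ ω ∂P, g₀ ω ≤ ‖f‖ :=
    ae_le_of_forall_setIntegral_le hg₀int (integrable_const _)
      fun s hs _ => (le_abs_self _).trans (hbound s hs)
  have hge : ∀ᵐ ω ∂P, -g₀ ω ≤ ‖f‖ :=
    ae_le_of_forall_setIntegral_le hg₀int.neg (integrable_const _)
      fun s hs _ => by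
        rw [integral_neg]
        exact (neg_le_abs _).trans (hbound s hs)
  let g : Ω → ℝ := fun ω => max (-‖f‖) (min ‖f‖ (g₀ ω))
  have hgm : Measurable g :=
    measurable_const.max (measurable_const.min (Lp.stronglyMeasurable g₀).measurable)
  have hgb : ∀ ω, |g ω| ≤ ‖f‖ := fun ω =>
    abs_le.2 ⟨le_max_left _ _, max_le (by linarith [norm_nonneg f]) (min_le_left _ _)⟩
  have hgg₀ : g =ᵐ[P] g₀ := by
    filter_upwards [hle, hge] with ω h₁ h₂
    simp only [g]
    rw [min_eq_right h₁, max_eq_right (by linarith)]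
  have hmulint : ∀ h : Ω → ℝ, Integrable h P → Integrable (fun ω => h ω * g ω) P := fun h hh =>
    hh.mul_bdd (c := ‖f‖) hgm.aestronglyMeasurable (ae_of_all _ hgb)
  refine ⟨g, hgm, ⟨_, hgb⟩, fun h => ?_⟩
  refine Lp.induction (by norm_num) (fun h : Lp ℝ 1 P => f h = ∫ ω, h ω * g ω ∂P) ?_ ?_ ?_ h
  · intro c s hs _
    rw [Lp.simpleFunc.coe_indicatorConst, hset hs, ← integral_const_mul, ← integral_indicator hs]
    refine integral_congr_ae ?_
    filter_upwards [indicatorConstLp_coeFn (p := 1) (hs := hs) (hμs := measure_ne_top P s)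
      (c := c), hgg₀] with ω h₁ h₂
    rw [h₁, h₂]
    by_cases hω : ω ∈ s <;> simp [hω]
  · intro u v hu hv _ hfu hfv
    rw [map_add, hfu, hfv, ← integral_add]
    · refine integral_congr_ae ?_
      filter_upwards [Lp.coeFn_add (hu.toLp u) (hv.toLp v)] with ω hω
      rw [hω, Pi.add_apply, add_mul]
    · exact hmulint _ (L1.integrable_coeFn _)
    · exact hmulint _ (L1.integrable_coeFn _)
  · refine isClosed_eq f.continuous ?_
    have hlip : LipschitzWith ‖f‖₊
        (fun h : Lp ℝ 1 P => ∫ ω, h ω * g ω ∂P) := by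
      refine LipschitzWith.of_dist_le_mul fun u v => ?_
      rw [Real.dist_eq, ← integral_sub (hmulint _ (L1.integrable_coeFn u))
        (hmulint _ (L1.integrable_coeFn v)), dist_eq_norm, L1.norm_eq_integral_norm,
        coe_nnnorm, ← integral_const_mul]
      refine (abs_integral_le_integral_abs).trans (integral_mono_ae ?_ ?_ ?_)
      · exact ((hmulint _ (L1.integrable_coeFn u)).sub (hmulint _ (L1.integrable_coeFn v))).abs
      · exact (L1.integrable_coeFn (u - v)).norm.const_mul _
      · filter_upwards [Lp.coeFn_sub u v] with ω hω
        rw [hω, Pi.sub_apply, ← sub_mul, abs_mul, mul_comm, Real.norm_eq_abs]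
        exact mul_le_mul_of_nonneg_right (hgb ω) (abs_nonneg _)
    exact hlip.continuous

theorem Dens.integrable {P : Measure Ω} {Z : Ω → ℝ} (hZ : Z ∈ Dens P) : Integrable Z P := by
  refine ⟨hZ.1.aestronglyMeasurable, ?_⟩
  rw [hasFiniteIntegral_iff_ofReal (ae_of_all _ hZ.2.1), hZ.2.2]
  exact ENNReal.one_lt_top

/-- Convergence of a sequence of functions in `σ(L¹, L^∞)`. -/
def WConv (P : Measure Ω) (Z : ℕ → Ω → ℝ) (W : Ω → ℝ) : Prop :=
  ∀ g : Ω → ℝ, Measurable g → (∃ C : ℝ, ∀ ω, |g ω| ≤ C) →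
    Tendsto (fun k => ∫ ω, Z k ω * g ω ∂P) atTop (nhds (∫ ω, W ω * g ω ∂P))

theorem WConv.comp {P : Measure Ω} {Z : ℕ → Ω → ℝ} {W : Ω → ℝ} (h : WConv P Z W) {φ : ℕ → ℕ}
    (hφ : StrictMono φ) : WConv P (fun k => Z (φ k)) W :=
  fun g hg hb => (h g hg hb).comp hφ.tendsto_atTop

theorem integrable_mul_of_bounded {P : Measure Ω} {Z g : Ω → ℝ} (hZ : Integrable Z P)
    (hg : Measurable g) (hb : ∃ C : ℝ, ∀ ω, |g ω| ≤ C) :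
    Integrable (fun ω => Z ω * g ω) P := by
  obtain ⟨C, hC⟩ := hb
  exact hZ.mul_bdd (c := C) hg.aestronglyMeasurable (ae_of_all _ hC)

/-- Mazur: a convex `L¹`-closed set of densities is weakly sequentially closed. -/
theorem L1Closed.mem_of_wConv {P : Measure Ω} [IsProbabilityMeasure P] {D : Set (Ω → ℝ)}
    (hsub : D ⊆ Dens P) (hconv : Convex ℝ D) (hclosed : L1Closed P D) {Z : ℕ → Ω → ℝ}
    (hZ : ∀ n, Z n ∈ D) {W : Ω → ℝ} (hW : W ∈ Dens P) (hlim : WConv P Z W) : W ∈ D := by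
  let S : Set (Lp ℝ 1 P) := {f | ∃ Y ∈ D, f =ᵐ[P] Y}
  have hS : Convex ℝ S := by
    rintro f ⟨Y, hY, hfY⟩ f' ⟨Y', hY', hfY'⟩ a b ha hb hab
    refine ⟨a • Y + b • Y', hconv hY hY' ha hb hab, ?_⟩
    filter_upwards [Lp.coeFn_add (a • f) (b • f'), Lp.coeFn_smul a f, Lp.coeFn_smul b f', hfY,
      hfY'] with ω h₁ h₂ h₃ h₄ h₅
    rw [h₁, Pi.add_apply, h₂, h₃, Pi.smul_apply, Pi.smul_apply, h₄, h₅]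
    rfl
  have hWi := Dens.integrable hW
  have hmem : hWi.toL1 W ∈ closure S := by
    by_contra hnot
    obtain ⟨f, u, hf, hu⟩ := geometric_hahn_banach_closed_point hS.closure isClosed_closure hnot
    obtain ⟨g, hg, hgb, hrep⟩ := exists_bounded_density_of_dual_L1 P f
    have hval : ∀ Y (hY : Integrable Y P), f (hY.toL1 Y) = ∫ ω, Y ω * g ω ∂P := by
      intro Y hY
      rw [hrep]
      refine integral_congr_ae ?_
      filter_upwards [hY.coeFn_toL1] with ω hω
      rw [hω]
    rw [hval] at hu
    refine absurd (le_of_tendsto (hlim g hg hgb) (Eventually.of_forall fun n => ?_)) (not_le.2 hu)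
    rw [← hval _ (Dens.integrable (hsub (hZ n)))]
    exact (hf _ (subset_closure ⟨Z n, hZ n, Integrable.coeFn_toL1 _⟩)).le
  obtain ⟨f, hfS, hf⟩ := mem_closure_iff_seq_limit.1 hmem
  choose Y hYD hY using hfS
  refine hclosed Y hYD W hW ?_
  rw [tendsto_iff_dist_tendsto_zero] at hf
  refine hf.congr fun n => ?_
  rw [dist_eq_norm, L1.norm_eq_integral_norm]
  refine integral_congr_ae ?_
  filter_upwards [Lp.coeFn_sub (f n) (hWi.toL1 W), hY n, hWi.coeFn_toL1] with ω h₁ h₂ h₃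
  rw [h₁, Pi.sub_apply, h₂, h₃, Real.norm_eq_abs]

theorem WSeqCompact.of_l1Closed {P : Measure Ω} [IsProbabilityMeasure P] {D D' : Set (Ω → ℝ)}
    (hD : WSeqCompact P D) (hsub : D ⊆ Dens P) (hD'D : D' ⊆ D) (hconv : Convex ℝ D')
    (hclosed : L1Closed P D') : WSeqCompact P D' := by
  intro Z hZ
  obtain ⟨W, hW, φ, hφ, hlim⟩ := hD Z fun n => hD'D (hZ n)
  exact ⟨W, hclosed.mem_of_wConv (hD'D.trans hsub) hconv (fun n => hZ (φ n)) (hsub hW) hlim,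
    φ, hφ, hlim⟩

/-- `X` is integrable against every element of `D` and `Z ↦ ∫ Z X` is weakly sequentially
continuous on `D`. -/
def WCont (P : Measure Ω) (D : Set (Ω → ℝ)) (X : Ω → ℝ) : Prop :=
  (∀ Z ∈ D, Integrable (fun ω => Z ω * X ω) P) ∧
    ∀ (Z : ℕ → Ω → ℝ) (W : Ω → ℝ), (∀ n, Z n ∈ D) → W ∈ D → WConv P Z W →
      Tendsto (fun n => ∫ ω, Z n ω * X ω ∂P) atTop (nhds (∫ ω, W ω * X ω ∂P))

theorem WCont.mono {P : Measure Ω} {D D' : Set (Ω → ℝ)} {X : Ω → ℝ} (h : WCont P D X)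
    (hD : D' ⊆ D) : WCont P D' X :=
  ⟨fun Z hZ => h.1 Z (hD hZ), fun Z W hZ hW hlim => h.2 Z W (fun n => hD (hZ n)) (hD hW) hlim⟩

theorem integral_combo_mul {P : Measure Ω} {Z W X : Ω → ℝ}
    (hZ : Integrable (fun ω => Z ω * X ω) P) (hW : Integrable (fun ω => W ω * X ω) P) (a b : ℝ) :
    ∫ ω, (a • Z + b • W) ω * X ω ∂P = a * ∫ ω, Z ω * X ω ∂P + b * ∫ ω, W ω * X ω ∂P := by
  rw [← integral_const_mul, ← integral_const_mul,
    ← integral_add (hZ.const_mul _) (hW.const_mul _)]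
  refine integral_congr_ae (ae_of_all _ fun ω => ?_)
  simp only [Pi.add_apply, Pi.smul_apply, smul_eq_mul]
  ring

theorem integral_mul_sum {P : Measure Ω} {ι : Type*} [Fintype ι] {Z : Ω → ℝ}
    {X : ι → Ω → ℝ} (w : ι → ℝ) (hX : ∀ i, Integrable (fun ω => Z ω * X i ω) P) :
    ∫ ω, Z ω * (∑ i, w i • X i) ω ∂P = ∑ i, w i * ∫ ω, Z ω * X i ω ∂P := by
  simp_rw [← integral_const_mul]
  rw [← integral_finsetSum _ fun i _ => (hX i).const_mul (w i)]
  refine integral_congr_ae (ae_of_all _ fun ω => ?_)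
  simp only [Finset.sum_apply, Pi.smul_apply, smul_eq_mul, Finset.mul_sum]
  exact Finset.sum_congr rfl fun i _ => by ring

theorem WCont.sum {P : Measure Ω} {D : Set (Ω → ℝ)} {ι : Type*} [Fintype ι] {X : ι → Ω → ℝ}
    (w : ι → ℝ) (hX : ∀ i, WCont P D (X i)) : WCont P D (∑ i, w i • X i) := by
  refine ⟨fun Z hZ => ?_, fun Z W hZ hW hlim => ?_⟩
  · have h := integrable_finsetSum Finset.univ fun i _ => ((hX i).1 Z hZ).const_mul (w i)
    refine h.congr (ae_of_all _ fun ω => ?_)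
    simp only [Finset.sum_apply, Pi.smul_apply, smul_eq_mul, Finset.mul_sum]
    exact Finset.sum_congr rfl fun i _ => by ring
  · simp_rw [integral_mul_sum w fun i => (hX i).1 W hW,
      fun n => integral_mul_sum w fun i => (hX i).1 (Z n) (hZ n)]
    exact tendsto_finsetSum _ fun i _ => ((hX i).2 Z W hZ hW hlim).const_mul (w i)

/-- The truncation of `X` to the set where `|X| ≤ n`. -/
noncomputable def trunc {α : Type*} (X : α → ℝ) (n : ℕ) : α → ℝ := {ω | |X ω| ≤ n}.indicator X

theorem measurable_trunc {X : Ω → ℝ} (hX : Measurable X) (n : ℕ) : Measurable (trunc X n) :=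
  hX.indicator (measurableSet_le hX.abs measurable_const)

theorem abs_trunc_le {α : Type*} (X : α → ℝ) (n : ℕ) (ω : α) : |trunc X n ω| ≤ n := by
  by_cases h : |X ω| ≤ n <;> simp [trunc, h]

theorem lintegral_tail_le {P : Measure Ω} {D : Set (Ω → ℝ)} (hsub : D ⊆ Dens P) {X : Ω → ℝ}
    (hX : Measurable X) (n : ℕ) {Z : Ω → ℝ} (hZ : Z ∈ D) :
    ∫⁻ ω, ‖Z ω * (X ω - trunc X n ω)‖ₑ ∂P ≤ tailSup P D X n := by
  refine le_trans (le_of_eq ?_) (le_iSup₂ (f := fun Z (_ : Z ∈ D) =>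
    ∫⁻ ω in {ω | (n : ℝ) < |X ω|}, ENNReal.ofReal (Z ω * |X ω|) ∂P) Z hZ)
  rw [← lintegral_indicator (measurableSet_lt measurable_const hX.abs)]
  refine lintegral_congr fun ω => ?_
  by_cases h : |X ω| ≤ n
  · simp [trunc, h]
  · rw [indicator_of_mem (show ω ∈ {ω | (n : ℝ) < |X ω|} from not_le.1 h), trunc,
      indicator_of_notMem (show ω ∉ {ω | |X ω| ≤ n} from h), sub_zero, Real.enorm_eq_ofReal_abs,
      abs_mul, abs_of_nonneg ((hsub hZ).2.1 ω)]

theorem wCont_of_mem_Ls {P : Measure Ω} {D : Set (Ω → ℝ)} (hsub : D ⊆ Dens P) {X : Ω → ℝ}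
    (hX : X ∈ Ls P D) : WCont P D X := by
  obtain ⟨hXm, htail⟩ := hX
  have htrunc : ∀ Z ∈ D, ∀ n, Integrable (fun ω => Z ω * trunc X n ω) P := fun Z hZ n =>
    integrable_mul_of_bounded (Dens.integrable (hsub hZ)) (measurable_trunc hXm n)
      ⟨n, abs_trunc_le X n⟩
  have hrest : ∀ Z ∈ D, ∀ n, tailSup P D X n < ⊤ →
      Integrable (fun ω => Z ω * (X ω - trunc X n ω)) P := fun Z hZ n hn =>
    ⟨((hsub hZ).1.mul (hXm.sub (measurable_trunc hXm n))).aestronglyMeasurable,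
      (lintegral_tail_le hsub hXm n hZ).trans_lt hn⟩
  have happrox : ∀ Z ∈ D, ∀ n, ∀ ε > 0, tailSup P D X n < ENNReal.ofReal ε →
      |∫ ω, Z ω * X ω ∂P - ∫ ω, Z ω * trunc X n ω ∂P| < ε := by
    intro Z hZ n ε hε hn
    have hsum : ∫ ω, Z ω * X ω ∂P
        = ∫ ω, Z ω * (X ω - trunc X n ω) ∂P + ∫ ω, Z ω * trunc X n ω ∂P := by
      rw [← integral_add (hrest Z hZ n (hn.trans ENNReal.ofReal_lt_top)) (htrunc Z hZ n)]
      exact integral_congr_ae (ae_of_all _ fun ω => by ring)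
    rw [hsum, add_sub_cancel_right, ← Real.norm_eq_abs]
    have hle : ENNReal.ofReal ‖∫ ω, Z ω * (X ω - trunc X n ω) ∂P‖ < ENNReal.ofReal ε := by
      rw [ofReal_norm]
      exact ((enorm_integral_le_lintegral_enorm _).trans
        (lintegral_tail_le hsub hXm n hZ)).trans_lt hn
    exact (ENNReal.ofReal_lt_ofReal_iff hε).1 hle
  have hsmall : ∀ ε > 0, ∃ n, tailSup P D X n < ENNReal.ofReal ε := fun ε hε =>
    (htail.eventually (gt_mem_nhds (ENNReal.ofReal_pos.2 hε))).exists
  refine ⟨fun Z hZ => ?_, fun Z W hZ hW hlim => ?_⟩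
  · obtain ⟨n, hn⟩ := hsmall 1 one_pos
    refine ((hrest Z hZ n (hn.trans ENNReal.ofReal_lt_top)).add (htrunc Z hZ n)).congr
      (ae_of_all _ fun ω => ?_)
    simp only [Pi.add_apply]
    ring
  · rw [Metric.tendsto_atTop]
    intro ε hε
    obtain ⟨n, hn⟩ := hsmall (ε / 3) (by positivity)
    obtain ⟨N, hN⟩ := Metric.tendsto_atTop.1
      (hlim (trunc X n) (measurable_trunc hXm n) ⟨n, abs_trunc_le X n⟩) (ε / 3) (by positivity)
    refine ⟨N, fun k hk => ?_⟩
    have h₁ := abs_lt.1 (happrox (Z k) (hZ k) n _ (by positivity) hn)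
    have h₂ := abs_lt.1 (happrox W hW n _ (by positivity) hn)
    have h₃ := abs_lt.1 (hN k hk)
    rw [Real.dist_eq, abs_lt]
    constructor <;> linarith [h₁.1, h₁.2, h₂.1, h₂.2, h₃.1, h₃.2]

/-- A strictly convex, weakly lower semicontinuous functional on densities. -/
noncomputable def invEnergy (P : Measure Ω) (Z : Ω → ℝ) : ℝ := ∫ ω, (1 + Z ω)⁻¹ ∂P

theorem abs_inv_one_add_le_one {z : ℝ} (hz : 0 ≤ z) : |(1 + z)⁻¹| ≤ 1 := by
  rw [abs_of_nonneg (by positivity)]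
  exact inv_le_one_of_one_le₀ (by linarith)

theorem integrable_inv_one_add {P : Measure Ω} [IsFiniteMeasure P] {Z : Ω → ℝ}
    (hZ : Z ∈ Dens P) : Integrable (fun ω => (1 + Z ω)⁻¹) P :=
  Integrable.of_bound (measurable_const.add hZ.1).inv.aestronglyMeasurable 1
    (ae_of_all _ fun ω => abs_inv_one_add_le_one (hZ.2.1 ω))

theorem invEnergy_nonneg {P : Measure Ω} {Z : Ω → ℝ} (hZ : Z ∈ Dens P) : 0 ≤ invEnergy P Z :=
  integral_nonneg fun ω => inv_nonneg.2 (add_nonneg zero_le_one (hZ.2.1 ω))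

theorem invEnergy_le_one {P : Measure Ω} [IsProbabilityMeasure P] {Z : Ω → ℝ}
    (hZ : Z ∈ Dens P) : invEnergy P Z ≤ 1 := by
  have h := integral_mono (integrable_inv_one_add hZ) (integrable_const (1 : ℝ))
    fun ω => (le_abs_self _).trans (abs_inv_one_add_le_one (hZ.2.1 ω))
  simpa [invEnergy] using h

theorem invEnergy_le_of_wConv {P : Measure Ω} [IsProbabilityMeasure P] {Z : ℕ → Ω → ℝ}
    {W : Ω → ℝ} (hZ : ∀ n, Z n ∈ Dens P) (hW : W ∈ Dens P) (hlim : WConv P Z W) {c : ℕ → ℝ}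
    {s : ℝ} (hc : Tendsto c atTop (nhds s)) (hle : ∀ n, invEnergy P (Z n) ≤ c n) :
    invEnergy P W ≤ s := by
  let g : Ω → ℝ := fun ω => (1 + W ω)⁻¹ ^ 2
  have hg : Measurable g := (measurable_const.add hW.1).inv.pow_const 2
  have hgb : ∃ C : ℝ, ∀ ω, |g ω| ≤ C :=
    ⟨1, fun ω => by
      rw [abs_pow]
      exact pow_le_one₀ (abs_nonneg _) (abs_inv_one_add_le_one (hW.2.1 ω))⟩
  have hWg := integrable_mul_of_bounded (Dens.integrable hW) hg hgb
  have htangent : ∀ n, invEnergy P W + ∫ ω, W ω * g ω ∂P ≤ c n + ∫ ω, Z n ω * g ω ∂P := by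
    intro n
    have hZg := integrable_mul_of_bounded (Dens.integrable (hZ n)) hg hgb
    refine le_trans ?_ (add_le_add_left (hle n) _)
    rw [invEnergy, invEnergy, ← integral_add (integrable_inv_one_add hW) hWg,
      ← integral_add (integrable_inv_one_add (hZ n)) hZg]
    refine integral_mono ((integrable_inv_one_add hW).add hWg)
      ((integrable_inv_one_add (hZ n)).add hZg) fun ω => ?_
    have hz := (hZ n).2.1 ω
    have hw := hW.2.1 ω
    have hdiff : (1 + Z n ω)⁻¹ + Z n ω * g ω - ((1 + W ω)⁻¹ + W ω * g ω)
        = (Z n ω - W ω) ^ 2 / ((1 + Z n ω) * (1 + W ω) ^ 2) := by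
      simp only [g]
      have h₁ : (1 + Z n ω) ≠ 0 := by positivity
      have h₂ : (1 + W ω) ≠ 0 := by positivity
      field_simp
      ring
    have hpos : 0 ≤ (Z n ω - W ω) ^ 2 / ((1 + Z n ω) * (1 + W ω) ^ 2) := by positivity
    simp only
    linarith
  have h := le_of_tendsto_of_tendsto' tendsto_const_nhds (hc.add (hlim g hg hgb)) htangent
  linarith

theorem ae_eq_of_invEnergy_midpoint {P : Measure Ω} [IsProbabilityMeasure P] {Z W : Ω → ℝ}
    (hZ : Z ∈ Dens P) (hW : W ∈ Dens P)
    (hM : (1 / 2 : ℝ) • Z + (1 / 2 : ℝ) • W ∈ Dens P)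
    (h : (invEnergy P Z + invEnergy P W) / 2 ≤ invEnergy P ((1 / 2 : ℝ) • Z + (1 / 2 : ℝ) • W)) :
    Z =ᵐ[P] W := by
  let d : Ω → ℝ := fun ω => ((1 + Z ω)⁻¹ + (1 + W ω)⁻¹) / 2 - (1 + (1 / 2 * Z ω + 1 / 2 * W ω))⁻¹
  have hd_eq : ∀ ω, d ω = (Z ω - W ω) ^ 2 / (2 * (1 + Z ω) * (1 + W ω) * (2 + Z ω + W ω)) := by
    intro ω
    have hz := hZ.2.1 ω
    have hw := hW.2.1 ω
    have h₁ : (1 + Z ω) ≠ 0 := by positivity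
    have h₂ : (1 + W ω) ≠ 0 := by positivity
    have h₃ : (2 + Z ω + W ω) ≠ 0 := by positivity
    have h₄ : 1 + (1 / 2 * Z ω + 1 / 2 * W ω) = (2 + Z ω + W ω) / 2 := by ring
    simp only [d]
    rw [h₄]
    field_simp
    ring
  have hd_nonneg : ∀ ω, 0 ≤ d ω := by
    intro ω
    have hz := hZ.2.1 ω
    have hw := hW.2.1 ω
    rw [hd_eq]
    positivity
  have hI := integrable_inv_one_add hM
  have hZW := ((integrable_inv_one_add hZ).add (integrable_inv_one_add hW)).div_const 2
  have hd_int : ∫ ω, d ω ∂P = (invEnergy P Z + invEnergy P W) / 2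
      - invEnergy P ((1 / 2 : ℝ) • Z + (1 / 2 : ℝ) • W) := by
    rw [invEnergy, invEnergy, invEnergy, ← integral_add (integrable_inv_one_add hZ)
      (integrable_inv_one_add hW), ← integral_div]
    exact integral_sub hZW hI
  have hzero : d =ᵐ[P] 0 := (integral_eq_zero_iff_of_nonneg hd_nonneg (hZW.sub hI)).1
    (le_antisymm (by rw [hd_int]; linarith) (integral_nonneg hd_nonneg))
  filter_upwards [hzero] with ω hω
  have hz := hZ.2.1 ω
  have hw := hW.2.1 ω
  rw [hd_eq, Pi.zero_apply, div_eq_zero_iff] at hω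
  rcases hω with hω | hω
  · exact sub_eq_zero.1 (pow_eq_zero_iff two_ne_zero |>.1 hω)
  · exact absurd hω (by positivity)

/-- Finite intersection property for the half-spaces `{Z | ∫ Z X ≤ 0}` in a convex weakly
sequentially compact set; uniqueness of minimizers of `invEnergy` handles uncountable families. -/
theorem exists_forall_integral_nonpos {P : Measure Ω} [IsProbabilityMeasure P]
    {K : Set (Ω → ℝ)} (hsub : K ⊆ Dens P) (hconv : Convex ℝ K) (hcomp : WSeqCompact P K)
    {𝒳 : Set (Ω → ℝ)} (hcont : ∀ X ∈ 𝒳, WCont P K X)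
    (hfin : ∀ S ⊆ 𝒳, S.Finite → ∃ Z ∈ K, ∀ X ∈ S, ∫ ω, Z ω * X ω ∂P ≤ 0) :
    ∃ Z ∈ K, ∀ X ∈ 𝒳, ∫ ω, Z ω * X ω ∂P ≤ 0 := by
  let F : Set (Ω → ℝ) → Set (Ω → ℝ) := fun S => {Z ∈ K | ∀ X ∈ S, ∫ ω, Z ω * X ω ∂P ≤ 0}
  let m : Set (Ω → ℝ) → ℝ := fun S => sInf (invEnergy P '' F S)
  have hFne : ∀ S ⊆ 𝒳, S.Finite → (invEnergy P '' F S).Nonempty := fun S hS hSf =>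
    (hfin S hS hSf).elim fun Z hZ => ⟨_, Z, hZ, rfl⟩
  have hbdd : ∀ S, BddBelow (invEnergy P '' F S) := fun S =>
    ⟨0, by rintro _ ⟨Z, hZ, rfl⟩; exact invEnergy_nonneg (hsub hZ.1)⟩
  have hm_le : ∀ S, ∀ Z ∈ F S, m S ≤ invEnergy P Z := fun S Z hZ => csInf_le (hbdd S) ⟨Z, hZ, rfl⟩
  let M : Set ℝ := m '' {S | S ⊆ 𝒳 ∧ S.Finite}
  have hMne : M.Nonempty := ⟨_, ∅, ⟨empty_subset _, finite_empty⟩, rfl⟩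
  have hMbdd : BddAbove M := by
    refine ⟨1, ?_⟩
    rintro _ ⟨S, ⟨hS, hSf⟩, rfl⟩
    obtain ⟨Z, hZ, hZS⟩ := hfin S hS hSf
    exact (hm_le S Z ⟨hZ, hZS⟩).trans (invEnergy_le_one (hsub hZ))
  let s : ℝ := sSup M
  have hS : ∀ n : ℕ, ∃ S, (S ⊆ 𝒳 ∧ S.Finite) ∧ s - 1 / ((n : ℝ) + 1) < m S := by
    intro n
    have hpos : (0 : ℝ) < 1 / ((n : ℝ) + 1) := by positivity
    obtain ⟨_, ⟨S, hS, rfl⟩, hlt⟩ := exists_lt_of_lt_csSup hMne (sub_lt_self s hpos)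
    exact ⟨S, hS, hlt⟩
  choose S hSmem hSlt using hS
  let U : ℕ → Set (Ω → ℝ) := fun n => ⋃ k ∈ Iic n, S k
  have hU : ∀ n, U n ⊆ 𝒳 ∧ (U n).Finite := fun n =>
    ⟨iUnion₂_subset fun k _ => (hSmem k).1, (finite_Iic n).biUnion fun k _ => (hSmem k).2⟩
  have hlimit : ∀ T ⊆ 𝒳, T.Finite → ∃ W ∈ K,
      (∀ n, ∀ X ∈ S n ∪ T, ∫ ω, W ω * X ω ∂P ≤ 0) ∧ invEnergy P W ≤ s := by
    intro T hT hTf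
    have hUT : ∀ n, U n ∪ T ⊆ 𝒳 ∧ (U n ∪ T).Finite := fun n =>
      ⟨union_subset (hU n).1 hT, (hU n).2.union hTf⟩
    have hex : ∀ n : ℕ, ∃ Z ∈ F (U n ∪ T), invEnergy P Z ≤ s + 1 / ((n : ℝ) + 1) := by
      intro n
      have hpos : (0 : ℝ) < 1 / ((n : ℝ) + 1) := by positivity
      have hms : m (U n ∪ T) ≤ s := le_csSup hMbdd ⟨_, hUT n, rfl⟩
      obtain ⟨_, ⟨Z, hZ, rfl⟩, hlt⟩ := exists_lt_of_csInf_lt (hFne _ (hUT n).1 (hUT n).2)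
        (show m (U n ∪ T) < s + 1 / ((n : ℝ) + 1) by linarith)
      exact ⟨Z, hZ, hlt.le⟩
    choose Z hZF hZe using hex
    obtain ⟨W, hW, φ, hφ, hlim⟩ := hcomp Z fun n => (hZF n).1
    refine ⟨W, hW, fun n X hX => ?_, ?_⟩
    · have hX𝒳 : X ∈ 𝒳 := hX.elim (fun h => (hSmem n).1 h) fun h => hT h
      refine le_of_tendsto ((hcont X hX𝒳).2 (fun k => Z (φ k)) W (fun k => (hZF _).1) hW hlim) ?_
      filter_upwards [eventually_ge_atTop n] with k hk
      refine (hZF (φ k)).2 X (hX.imp (fun h => ?_) id)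
      exact mem_biUnion (show n ∈ Iic (φ k) from hk.trans hφ.le_apply) h
    · refine invEnergy_le_of_wConv (fun k => hsub (hZF (φ k)).1) (hsub hW) hlim
        (c := fun k => s + 1 / ((φ k : ℝ) + 1)) ?_ fun k => hZe (φ k)
      have h₀ : Tendsto (fun n : ℕ => s + 1 / ((n : ℝ) + 1)) atTop (nhds (s + 0)) :=
        tendsto_const_nhds.add tendsto_one_div_add_atTop_nhds_zero_nat
      rw [add_zero] at h₀
      exact h₀.comp hφ.tendsto_atTop
  obtain ⟨Z, hZ, hZS, hZe⟩ := hlimit ∅ (empty_subset _) finite_empty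
  refine ⟨Z, hZ, fun X hX => ?_⟩
  obtain ⟨W, hW, hWS, hWe⟩ := hlimit {X} (singleton_subset_iff.2 hX) (finite_singleton X)
  have hMid : (1 / 2 : ℝ) • Z + (1 / 2 : ℝ) • W ∈ K :=
    hconv hZ hW (by norm_num) (by norm_num) (by norm_num)
  have hMidF : ∀ n, (1 / 2 : ℝ) • Z + (1 / 2 : ℝ) • W ∈ F (S n) := by
    refine fun n => ⟨hMid, fun Y hY => ?_⟩
    have hYc := hcont Y ((hSmem n).1 hY)
    rw [integral_combo_mul (hYc.1 Z hZ) (hYc.1 W hW)]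
    linarith [hZS n Y (Or.inl hY), hWS n Y (Or.inl hY)]
  have hs_le : s ≤ invEnergy P ((1 / 2 : ℝ) • Z + (1 / 2 : ℝ) • W) := by
    have h₀ : Tendsto (fun n : ℕ => s - 1 / ((n : ℝ) + 1)) atTop (nhds (s - 0)) :=
      tendsto_const_nhds.sub tendsto_one_div_add_atTop_nhds_zero_nat
    rw [sub_zero] at h₀
    exact le_of_tendsto' h₀ fun n => (hSlt n).le.trans (hm_le _ _ (hMidF n))
  have hae := ae_eq_of_invEnergy_midpoint (hsub hZ) (hsub hW) (hsub hMid) (by linarith)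
  have hint : ∫ ω, Z ω * X ω ∂P = ∫ ω, W ω * X ω ∂P := by
    refine integral_congr_ae ?_
    filter_upwards [hae] with ω hω
    rw [hω]
  rw [hint]
  exact hWS 0 X (Or.inr rfl)

theorem WSeqCompact.isCompact_image {P : Measure Ω} {D : Set (Ω → ℝ)} (hD : WSeqCompact P D)
    {E : Type*} [MetricSpace E] (f : (Ω → ℝ) → E)
    (hf : ∀ (Z : ℕ → Ω → ℝ) (W : Ω → ℝ), (∀ n, Z n ∈ D) → W ∈ D → WConv P Z W →
      Tendsto (fun n => f (Z n)) atTop (nhds (f W))) : IsCompact (f '' D) := by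
  refine IsSeqCompact.isCompact fun y hy => ?_
  choose Z hZ hZy using hy
  obtain ⟨W, hW, φ, hφ, hlim⟩ := hD Z hZ
  refine ⟨f W, ⟨W, hW, rfl⟩, φ, hφ, ?_⟩
  exact (hf (fun k => Z (φ k)) W (fun k => hZ _) hW hlim).congr fun k => hZy (φ k)

theorem exists_weights_of_no_integral_nonpos {P : Measure Ω} {K : Set (Ω → ℝ)}
    (hne : K.Nonempty) (hconv : Convex ℝ K) (hcomp : WSeqCompact P K)
    {ι : Type*} [Fintype ι] {X : ι → Ω → ℝ} (hX : ∀ i, WCont P K (X i))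
    (hno : ¬∃ Z ∈ K, ∀ i, ∫ ω, Z ω * X i ω ∂P ≤ 0) :
    ∃ w : ι → ℝ, (∀ i, 0 ≤ w i) ∧ ∑ i, w i = 1 ∧
      ∀ Z ∈ K, 0 < ∫ ω, Z ω * (∑ i, w i • X i) ω ∂P := by
  classical
  let L : (Ω → ℝ) → ι → ℝ := fun Z i => ∫ ω, Z ω * X i ω ∂P
  have hLcomp : IsCompact (L '' K) := hcomp.isCompact_image L fun Z W hZ hW hlim =>
    tendsto_pi_nhds.2 fun i => (hX i).2 Z W hZ hW hlim
  have hLconv : Convex ℝ (L '' K) := by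
    rintro _ ⟨Z, hZ, rfl⟩ _ ⟨W, hW, rfl⟩ a b ha hb hab
    exact ⟨a • Z + b • W, hconv hZ hW ha hb hab,
      funext fun i => integral_combo_mul ((hX i).1 Z hZ) ((hX i).1 W hW) a b⟩
  have hdisj : Disjoint (Iic (0 : ι → ℝ)) (L '' K) := by
    rw [Set.disjoint_left]
    rintro _ hy ⟨Z, hZ, rfl⟩
    exact hno ⟨Z, hZ, hy⟩
  obtain ⟨f, u, v, hu, huv, hv⟩ := geometric_hahn_banach_closed_compact
    (convex_Iic (0 : ι → ℝ)) isClosed_Iic hLconv hLcomp hdisj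
  have hu0 : 0 < u := by simpa using hu 0 (mem_Iic.2 le_rfl)
  let l : ι → ℝ := fun i => f (Pi.single i 1)
  have hf : ∀ y, f y = ∑ i, l i * y i := by
    intro y
    have hy : y = ∑ i, y i • (Pi.single i 1 : ι → ℝ) := by
      simpa using pi_eq_sum_univ' y
    conv_lhs => rw [hy]
    rw [map_sum]
    exact Finset.sum_congr rfl fun i _ => by rw [map_smul, smul_eq_mul, mul_comm]
  have hl : ∀ i, 0 ≤ l i := by
    intro i
    by_contra hneg
    have hneg : l i < 0 := not_le.1 hneg
    have hmem : (u / l i) • (Pi.single i 1 : ι → ℝ) ∈ Iic (0 : ι → ℝ) := by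
      intro j
      have hq : u / l i ≤ 0 := (div_neg_of_pos_of_neg hu0 hneg).le
      by_cases hj : j = i
      · subst hj
        simpa using hq
      · simp [Pi.single_eq_of_ne hj]
    have hlt := hu _ hmem
    rw [map_smul, smul_eq_mul, div_mul_cancel₀ _ hneg.ne] at hlt
    exact lt_irrefl _ hlt
  have hpos : ∀ Z ∈ K, 0 < ∑ i, l i * L Z i := fun Z hZ => by
    rw [← hf]
    exact (hu0.trans huv).trans (hv _ ⟨Z, hZ, rfl⟩)
  have hsum : 0 < ∑ i, l i := by
    refine lt_of_le_of_ne (Finset.sum_nonneg fun i _ => hl i) fun h0 => ?_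
    obtain ⟨Z, hZ⟩ := hne
    have hz := (Finset.sum_eq_zero_iff_of_nonneg fun i _ => hl i).1 h0.symm
    refine (hpos Z hZ).ne' (Finset.sum_eq_zero fun i hi => ?_)
    rw [hz i hi, zero_mul]
  refine ⟨fun i => l i / ∑ j, l j, fun i => div_nonneg (hl i) hsum.le, ?_, fun Z hZ => ?_⟩
  · rw [← Finset.sum_div, div_self hsum.ne']
  · rw [integral_mul_sum _ fun i => (hX i).1 Z hZ]
    simp_rw [div_mul_eq_mul_div]
    rw [← Finset.sum_div]
    exact div_pos (hpos Z hZ) hsum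

theorem eexp_eq_integral {P : Measure Ω} {Z X : Ω → ℝ}
    (h : Integrable (fun ω => Z ω * X ω) P) :
    eexp P Z X = ((∫ ω, Z ω * X ω ∂P : ℝ) : EReal) := by
  have hpos : ∫⁻ ω, ENNReal.ofReal (Z ω * X ω) ∂P ≠ ⊤ :=
    ((lintegral_mono fun ω => Real.ofReal_le_enorm _).trans_lt h.2).ne
  have hneg : ∫⁻ ω, ENNReal.ofReal (-(Z ω * X ω)) ∂P ≠ ⊤ :=
    ((lintegral_mono fun ω => Real.ofReal_le_enorm _).trans_lt h.neg.2).ne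
  rw [eexp, if_neg hneg, integral_eq_lintegral_pos_part_sub_lintegral_neg_part h, EReal.coe_sub,
    EReal.coe_ennreal_toReal hpos, EReal.coe_ennreal_toReal hneg]

theorem exists_cohU_eq_integral {P : Measure Ω} {D : Set (Ω → ℝ)} (hne : D.Nonempty)
    (hcomp : WSeqCompact P D) {X : Ω → ℝ} (hX : WCont P D X) :
    ∃ Z ∈ D, cohU P D X = ((∫ ω, Z ω * X ω ∂P : ℝ) : EReal) := by
  obtain ⟨_, ⟨Z, hZ, rfl⟩, hmin⟩ :=
    (hcomp.isCompact_image (fun Z => ∫ ω, Z ω * X ω ∂P) hX.2).exists_isLeast (hne.image _)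
  refine ⟨Z, hZ, le_antisymm ?_ (le_iInf₂ fun W hW => ?_)⟩
  · rw [← eexp_eq_integral (hX.1 Z hZ)]
    exact iInf₂_le Z hZ
  · rw [eexp_eq_integral (hX.1 W hW)]
    exact EReal.coe_le_coe_iff.2 (hmin ⟨W, hW, rfl⟩)

theorem coe_le_eexp {P : Measure Ω} {Z X : Ω → ℝ} {c : ℝ} (h : (c : EReal) ≤ eexp P Z X) :
    ∫⁻ ω, ENNReal.ofReal (-(Z ω * X ω)) ∂P ≠ ⊤ ∧
      ENNReal.ofReal c + ∫⁻ ω, ENNReal.ofReal (-(Z ω * X ω)) ∂P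
        ≤ ∫⁻ ω, ENNReal.ofReal (Z ω * X ω) ∂P + ENNReal.ofReal (-c) := by
  rw [eexp] at h
  split_ifs at h with hN
  · exact absurd h (by simp)
  · refine ⟨hN, ?_⟩
    generalize ∫⁻ ω, ENNReal.ofReal (-(Z ω * X ω)) ∂P = N at h hN ⊢
    generalize ∫⁻ ω, ENNReal.ofReal (Z ω * X ω) ∂P = p at h ⊢
    rcases eq_or_ne p ⊤ with rfl | hp
    · simp
    lift N to NNReal using hN
    lift p to NNReal using hp
    rw [EReal.coe_nnreal_eq_coe_real, EReal.coe_nnreal_eq_coe_real, ← EReal.coe_sub,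
      EReal.coe_le_coe_iff] at h
    rw [ENNReal.ofReal, ENNReal.ofReal]
    norm_cast
    rw [← NNReal.coe_le_coe]
    push_cast
    rcases le_total 0 c with hc | hc
    · rw [Real.coe_toNNReal _ hc, Real.toNNReal_of_nonpos (by linarith)]
      simp only [NNReal.coe_zero]
      linarith
    · rw [Real.toNNReal_of_nonpos hc, Real.coe_toNNReal _ (by linarith)]
      simp only [NNReal.coe_zero]
      linarith

theorem lintegral_combo_ofReal {P : Measure Ω} {Z W Y : Ω → ℝ} (hZ : Z ∈ Dens P)
    (hW : W ∈ Dens P) (hY : Measurable Y) {a b : ℝ} (ha : 0 ≤ a) (hb : 0 ≤ b) :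
    ∫⁻ ω, ENNReal.ofReal ((a * Z ω + b * W ω) * Y ω) ∂P
      = ENNReal.ofReal a * ∫⁻ ω, ENNReal.ofReal (Z ω * Y ω) ∂P
        + ENNReal.ofReal b * ∫⁻ ω, ENNReal.ofReal (W ω * Y ω) ∂P := by
  have hmZ : Measurable fun ω => ENNReal.ofReal (Z ω * Y ω) := (hZ.1.mul hY).ennreal_ofReal
  have hmW : Measurable fun ω => ENNReal.ofReal (W ω * Y ω) := (hW.1.mul hY).ennreal_ofReal
  rw [← lintegral_const_mul _ hmZ, ← lintegral_const_mul _ hmW,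
    ← lintegral_add_left (hmZ.const_mul _)]
  refine lintegral_congr fun ω => ?_
  have hz := hZ.2.1 ω
  have hw := hW.2.1 ω
  rw [← ENNReal.ofReal_mul ha, ← ENNReal.ofReal_mul hb]
  rcases le_total 0 (Y ω) with hy | hy
  · rw [← ENNReal.ofReal_add (by positivity) (by positivity)]
    congr 1
    ring
  · have h₁ : a * (Z ω * Y ω) ≤ 0 := mul_nonpos_of_nonneg_of_nonpos ha
      (mul_nonpos_of_nonneg_of_nonpos hz hy)
    have h₂ : b * (W ω * Y ω) ≤ 0 := mul_nonpos_of_nonneg_of_nonpos hb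
      (mul_nonpos_of_nonneg_of_nonpos hw hy)
    rw [ENNReal.ofReal_of_nonpos h₁, ENNReal.ofReal_of_nonpos h₂,
      ENNReal.ofReal_of_nonpos (by linarith), add_zero]

theorem eexp_combo_pos {P : Measure Ω} {Z W X : Ω → ℝ} (hZ : Z ∈ Dens P) (hW : W ∈ Dens P)
    (hX : Measurable X) {a b c d : ℝ} (ha : 0 ≤ a) (hb : 0 ≤ b) (hc : (c : EReal) ≤ eexp P Z X)
    (hd : (d : EReal) ≤ eexp P W X) (hpos : 0 < a * c + b * d) :
    0 < eexp P (fun ω => a * Z ω + b * W ω) X := by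
  obtain ⟨hNZ, hleZ⟩ := coe_le_eexp hc
  obtain ⟨hNW, hleW⟩ := coe_le_eexp hd
  have hN := lintegral_combo_ofReal hZ hW hX.neg ha hb
  have hp := lintegral_combo_ofReal hZ hW hX ha hb
  simp only [Pi.neg_apply, mul_neg] at hN
  rw [eexp, hN, hp]
  generalize ∫⁻ ω, ENNReal.ofReal (-(Z ω * X ω)) ∂P = NZ at *
  generalize ∫⁻ ω, ENNReal.ofReal (-(W ω * X ω)) ∂P = NW at *
  generalize ∫⁻ ω, ENNReal.ofReal (Z ω * X ω) ∂P = pZ at *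
  generalize ∫⁻ ω, ENNReal.ofReal (W ω * X ω) ∂P = pW at *
  have hsum := add_le_add (mul_le_mul_right hleZ (ENNReal.ofReal a))
    (mul_le_mul_right hleW (ENNReal.ofReal b))
  have hNtop : ENNReal.ofReal a * NZ + ENNReal.ofReal b * NW ≠ ⊤ :=
    ENNReal.add_ne_top.2 ⟨ENNReal.mul_ne_top ENNReal.ofReal_ne_top hNZ,
      ENNReal.mul_ne_top ENNReal.ofReal_ne_top hNW⟩
  have hsum' : ENNReal.ofReal a * NZ + ENNReal.ofReal b * NW
      + (ENNReal.ofReal a * ENNReal.ofReal c + ENNReal.ofReal b * ENNReal.ofReal d)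
      ≤ ENNReal.ofReal a * pZ + ENNReal.ofReal b * pW
      + (ENNReal.ofReal a * ENNReal.ofReal (-c) + ENNReal.ofReal b * ENNReal.ofReal (-d)) := by
    exact (le_of_eq (by ring)).trans (hsum.trans (le_of_eq (by ring)))
  rw [if_neg hNtop]
  generalize ENNReal.ofReal a * NZ + ENNReal.ofReal b * NW = N at *
  generalize ENNReal.ofReal a * pZ + ENNReal.ofReal b * pW = p at *
  rcases eq_or_ne p ⊤ with rfl | hptop
  · lift N to NNReal using hNtop
    have h : ((⊤ : ℝ≥0∞) : EReal) - ((N : ℝ≥0∞) : EReal) = ⊤ := by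
      exact EReal.top_sub_coe N
    rw [h]
    exact EReal.zero_lt_top
  lift N to NNReal using hNtop
  lift p to NNReal using hptop
  simp only [ENNReal.ofReal] at hsum'
  norm_cast at hsum'
  rw [← NNReal.coe_le_coe] at hsum'
  push_cast at hsum'
  simp only [Real.coe_toNNReal', max_eq_left ha, max_eq_left hb] at hsum'
  have hc' : max c 0 - max (-c) 0 = c := by
    rcases le_total 0 c with h | h
    · rw [max_eq_left h, max_eq_right (by linarith), sub_zero]
    · rw [max_eq_right h, max_eq_left (by linarith)]
      ring
  have hd' : max d 0 - max (-d) 0 = d := by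
    rcases le_total 0 d with h | h
    · rw [max_eq_left h, max_eq_right (by linarith), sub_zero]
    · rw [max_eq_right h, max_eq_left (by linarith)]
      ring
  have hlt : (0 : ℝ) < (p : ℝ) - N := by
    have h₁ : a * c = a * max c 0 - a * max (-c) 0 := by rw [← mul_sub, hc']
    have h₂ : b * d = b * max d 0 - b * max (-d) 0 := by rw [← mul_sub, hd']
    linarith
  rw [EReal.coe_nnreal_eq_coe_real, EReal.coe_nnreal_eq_coe_real, ← EReal.coe_sub]
  exact EReal.coe_pos.2 hlt

theorem exists_real_bounds_of_lt_raroc {P : Measure Ω} {PD RD : Set (Ω → ℝ)} (hPD : PD ⊆ RD)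
    {X : Ω → ℝ} {R : ℝ} (hR : 0 ≤ R) (h : (R : EReal) < RAROC P PD RD X) :
    ∃ c d : ℝ, (c : EReal) ≤ cohU P PD X ∧ (d : EReal) ≤ cohU P RD X ∧ 0 < c + R * d := by
  have hrp : cohU P RD X ≤ cohU P PD X := biInf_mono hPD
  have hR' : (0 : EReal) ≤ R := EReal.coe_nonneg.2 hR
  rw [RAROC] at h
  split_ifs at h with hif
  · obtain ⟨c, hc₀, hc⟩ := EReal.lt_iff_exists_real_btwn.1 hif.1
    exact ⟨c, 0, hc.le, hif.2, by simpa using EReal.coe_pos.1 hc₀⟩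
  · generalize cohU P PD X = p at *
    generalize cohU P RD X = r at *
    induction r with
    | bot => simp [not_lt.2 hR'] at h
    | top => simp [not_lt.2 hR'] at h
    | coe r =>
      rcases le_or_gt 0 r with hr | hr
      · have hp : p ≤ 0 := not_lt.1 fun hp => hif ⟨hp, EReal.coe_nonneg.2 hr⟩
        have hp0 : p = 0 := le_antisymm hp ((EReal.coe_nonneg.2 hr).trans hrp)
        rw [hp0, EReal.zero_div] at h
        exact absurd h (not_lt.2 hR')
      · induction p with
        | bot => exact absurd hrp (by simp)
        | top => exact ⟨-(R * r) + 1, r, le_top, le_rfl, by linarith⟩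
        | coe p =>
          rw [← EReal.coe_neg, ← EReal.coe_div, EReal.coe_lt_coe_iff,
            lt_div_iff₀ (neg_pos.2 hr)] at h
          exact ⟨p, r, le_rfl, le_rfl, by linarith⟩

theorem lt_raroc_of_coe {P : Measure Ω} {PD RD : Set (Ω → ℝ)} (hPD : PD ⊆ RD) {X : Ω → ℝ}
    {R c d : ℝ} (hc : cohU P PD X = c) (hd : cohU P RD X = d)
    (hpos : 0 < c + R * d) : (R : EReal) < RAROC P PD RD X := by
  have hdc : d ≤ c := by
    have hrp : cohU P RD X ≤ cohU P PD X := biInf_mono hPD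
    rwa [hc, hd, EReal.coe_le_coe_iff] at hrp
  rw [RAROC, hc, hd]
  split_ifs with hif
  · exact EReal.coe_lt_top R
  · rw [EReal.coe_pos, EReal.coe_nonneg] at hif
    have hd0 : d < 0 := by
      by_contra hd0
      rw [not_lt] at hd0
      refine hif ⟨?_, hd0⟩
      by_contra hc0
      have hd' : d = 0 := by linarith
      rw [hd'] at hpos
      linarith
    rw [← EReal.coe_neg, ← EReal.coe_div, EReal.coe_lt_coe_iff, lt_div_iff₀ (neg_pos.2 hd0)]
    linarith

/-- The set `a • D + b • D'` of densities. -/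
def comboSet {α : Type*} (a b : ℝ) (D D' : Set (α → ℝ)) : Set (α → ℝ) :=
  {Z | ∃ Zp ∈ D, ∃ Zr ∈ D', Z = fun ω => a * Zp ω + b * Zr ω}

theorem convex_comboSet {α : Type*} {a b : ℝ} {D D' : Set (α → ℝ)} (hD : Convex ℝ D)
    (hD' : Convex ℝ D') : Convex ℝ (comboSet a b D D') := by
  rintro _ ⟨Y, hY, Y', hY', rfl⟩ _ ⟨V, hV, V', hV', rfl⟩ s t hs ht hst
  refine ⟨_, hD hY hV hs ht hst, _, hD' hY' hV' hs ht hst, funext fun ω => ?_⟩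
  simp only [Pi.add_apply, Pi.smul_apply, smul_eq_mul]
  ring

theorem WSeqCompact.comboSet {P : Measure Ω} {a b : ℝ} {D D' : Set (Ω → ℝ)} (hsub : D ⊆ Dens P)
    (hsub' : D' ⊆ Dens P) (hD : WSeqCompact P D) (hD' : WSeqCompact P D') :
    WSeqCompact P (comboSet a b D D') := by
  intro Z hZ
  choose Y hY Y' hY' hZeq using hZ
  obtain ⟨W, hW, φ, hφ, hlim⟩ := hD Y hY
  obtain ⟨W', hW', ψ, hψ, hlim'⟩ := hD' (fun k => Y' (φ k)) fun k => hY' (φ k)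
  refine ⟨_, ⟨W, hW, W', hW', rfl⟩, φ ∘ ψ, hφ.comp hψ, fun g hg hgb => ?_⟩
  have hcombo : ∀ V ∈ D, ∀ V' ∈ D', ∫ ω, (a * V ω + b * V' ω) * g ω ∂P
      = a * ∫ ω, V ω * g ω ∂P + b * ∫ ω, V' ω * g ω ∂P := fun V hV V' hV' =>
    integral_combo_mul (integrable_mul_of_bounded (Dens.integrable (hsub hV)) hg hgb)
      (integrable_mul_of_bounded (Dens.integrable (hsub' hV')) hg hgb) a b
  simp_rw [hZeq, hcombo W hW W' hW', fun k => hcombo (Y k) (hY k) (Y' k) (hY' k)]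
  exact ((WConv.comp hlim hψ g hg hgb).const_mul a).add ((hlim' g hg hgb).const_mul b)

/-- Fundamental Theorem of Asset Pricing, RAROC-based NGD.
There is no `X ∈ A` with `RAROC(X) > R` iff
`((1/(1+R))·𝒫𝒟 + (R/(1+R))·ℛ𝒟) ∩ ℛ(A) ≠ ∅`. -/
theorem stmt_13 (P : Measure Ω) [IsProbabilityMeasure P] (RD PD : Set (Ω → ℝ))
    (hRDsub : RD ⊆ Dens P) (hRDne : RD.Nonempty) (hRDconv : Convex ℝ RD)
    (hRDcomp : WSeqCompact P RD)
    (hPDsub : PD ⊆ RD) (hPDne : PD.Nonempty) (hPDconv : Convex ℝ PD)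
    (hPDclosed : L1Closed P PD)
    (A : Set (Ω → ℝ)) (hAmeas : ∀ X ∈ A, Measurable X) (hAconv : Convex ℝ A)
    (hAcons : DConsistent P RD A) (R : ℝ) (hR : 0 ≤ R) :
    (¬∃ X ∈ A, (R : EReal) < RAROC P PD RD X) ↔
      ({Z : Ω → ℝ | ∃ Zp ∈ PD, ∃ Zr ∈ RD,
          Z = fun ω => (1 / (1 + R)) * Zp ω + (R / (1 + R)) * Zr ω}
        ∩ RiskNeutral P A).Nonempty := by
  have h1R : 0 < 1 + R := by linarith
  have ha : 0 ≤ 1 / (1 + R) := by positivity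
  have hb : 0 ≤ R / (1 + R) := by positivity
  have hab : 1 / (1 + R) + R / (1 + R) = 1 := by field_simp
  constructor
  · intro hno
    obtain ⟨A', hA'sub, hA'eq⟩ := hAcons
    have hPDcomp : WSeqCompact P PD := hRDcomp.of_l1Closed hRDsub hPDsub hPDconv hPDclosed
    let K := comboSet (1 / (1 + R)) (R / (1 + R)) PD RD
    have hKRD : K ⊆ RD := by
      rintro _ ⟨Zp, hZp, Zr, hZr, rfl⟩
      exact hRDconv (hPDsub hZp) hZr ha hb hab
    have hKne : K.Nonempty := by
      obtain ⟨Zp, hZp⟩ := hPDne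
      obtain ⟨Zr, hZr⟩ := hRDne
      exact ⟨_, Zp, hZp, Zr, hZr, rfl⟩
    have hKconv : Convex ℝ K := convex_comboSet hPDconv hRDconv
    have hKcomp : WSeqCompact P K :=
      WSeqCompact.comboSet (hPDsub.trans hRDsub) hRDsub hPDcomp hRDcomp
    have hcont : ∀ X ∈ A', WCont P RD X := fun X hX => wCont_of_mem_Ls hRDsub (hA'sub hX).2
    obtain ⟨Z, hZK, hZ⟩ := exists_forall_integral_nonpos (hKRD.trans hRDsub) hKconv hKcomp
      (fun X hX => (hcont X hX).mono hKRD) (by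
        intro S hS hSf
        by_contra hnone
        have := hSf.fintype
        have hScont : ∀ X : S, WCont P RD X := fun X => hcont X (hS X.2)
        obtain ⟨w, hw, hw1, hwpos⟩ := exists_weights_of_no_integral_nonpos hKne hKconv hKcomp
          (X := fun X : S => (X : Ω → ℝ)) (fun X => (hScont X).mono hKRD) fun ⟨Z, hZ, hZS⟩ =>
            hnone ⟨Z, hZ, fun X hX => hZS ⟨X, hX⟩⟩
        have hXA : ∑ X : S, w X • (X : Ω → ℝ) ∈ A :=
          hAconv.sum_mem (fun X _ => hw X) hw1 fun X _ => (hA'sub (hS X.2)).1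
        have hXcont : WCont P RD (∑ X : S, w X • (X : Ω → ℝ)) := WCont.sum w hScont
        obtain ⟨Zp, hZp, hp⟩ := exists_cohU_eq_integral hPDne hPDcomp (hXcont.mono hPDsub)
        obtain ⟨Zr, hZr, hr⟩ := exists_cohU_eq_integral hRDne hRDcomp hXcont
        refine hno ⟨_, hXA, lt_raroc_of_coe hPDsub hp hr ?_⟩
        have hpos := hwpos _ ⟨Zp, hZp, Zr, hZr, rfl⟩
        have hcombo := integral_combo_mul (hXcont.1 Zp (hPDsub hZp)) (hXcont.1 Zr hZr)
          (1 / (1 + R)) (R / (1 + R))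
        simp only [Pi.add_apply, Pi.smul_apply, smul_eq_mul] at hcombo
        rw [hcombo, div_mul_eq_mul_div, div_mul_eq_mul_div, ← add_div, one_mul] at hpos
        exact (div_pos_iff_of_pos_right h1R).1 hpos)
    have hZRN : Z ∈ RD ∩ RiskNeutral P A := by
      rw [hA'eq]
      refine ⟨hKRD hZK, hRDsub (hKRD hZK), fun X hX => ?_⟩
      rw [eexp_eq_integral ((hcont X hX).1 Z (hKRD hZK))]
      exact EReal.coe_nonpos.2 (hZ X hX)
    exact ⟨Z, hZK, hZRN.2⟩
  · rintro ⟨_, ⟨Zp, hZp, Zr, hZr, rfl⟩, -, hrn⟩ ⟨X, hX, hlt⟩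
    obtain ⟨c, d, hc, hd, hpos⟩ := exists_real_bounds_of_lt_raroc hPDsub hR hlt
    refine absurd (hrn X hX) (not_le.2 ?_)
    refine eexp_combo_pos (hRDsub (hPDsub hZp)) (hRDsub hZr) (hAmeas X hX) ha hb
      (hc.trans (iInf₂_le Zp hZp)) (hd.trans (iInf₂_le Zr hZr)) ?_
    rw [div_mul_eq_mul_div, div_mul_eq_mul_div, ← add_div, one_mul]
    exact div_pos hpos h1R
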